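/- The equational theory LOPP is sound and complete for linear optical circuits: for any two raw LOPP circuits C₁ and C₂ with the same number of modes, LOPP ⊢ C₁ = C₂ if and only if ⟦C₁⟧ = ⟦C₂⟧. (Theorem 1 of the paper.) -/

import Mathlib

open Matrix Complex

noncomputable section

/-- Raw LOPP circuits: syntactic terms generated by phase shifters, beam splitters,
the identity wire, the swap and the empty circuit, closed under sequential
composition `comp C₂ C₁` (meaning `C₂ ∘ C₁`) and parallel composition `tens`. -/
inductive LOPP : ℕ → Type
  | phase (φ : ℝ) : LOPP 1
  | bs (θ : ℝ) : LOPP 2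
  | wire : LOPP 1
  | swap : LOPP 2
  | empty : LOPP 0
  | comp {m : ℕ} : LOPP m → LOPP m → LOPP m
  | tens {m₁ m₂ : ℕ} : LOPP m₁ → LOPP m₂ → LOPP (m₁ + m₂)

/-- The interpretation `⟦C⟧` of an `m`-mode raw LOPP circuit as an `m×m` complex
matrix; parallel composition is interpreted as the direct sum. -/
noncomputable def sem : {m : ℕ} → LOPP m → Matrix (Fin m) (Fin m) ℂ
  | _, LOPP.phase φ => Matrix.of fun _ _ => Complex.exp (φ * Complex.I)
  | _, LOPP.bs θ =>
      !![(Real.cos θ : ℂ), Complex.I * (Real.sin θ : ℂ);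
         Complex.I * (Real.sin θ : ℂ), (Real.cos θ : ℂ)]
  | _, LOPP.wire => 1
  | _, LOPP.swap => !![0, 1; 1, 0]
  | _, LOPP.empty => 1
  | _, LOPP.comp C₂ C₁ => sem C₂ * sem C₁
  | _, LOPP.tens C₁ C₂ =>
      Matrix.reindex finSumFinEquiv finSumFinEquiv
        (Matrix.fromBlocks (sem C₁) 0 0 (sem C₂))

/-- Transport of a raw circuit along an equality of mode numbers. -/
def castC {m m' : ℕ} (h : m = m') (C : LOPP m) : LOPP m' := h ▸ C

/-- `id^{⊗m}`: `m` parallel copies of the identity wire. -/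
def idPow : (m : ℕ) → LOPP m
  | 0 => LOPP.empty
  | m + 1 => LOPP.tens (idPow m) LOPP.wire

/-- The swap circuits `σ₀ := id`, `σ_{m+1} := (swap ⊗ id^{⊗m}) ∘ (id ⊗ σ_m)`. -/
def sigmaC : (m : ℕ) → LOPP (m + 1)
  | 0 => LOPP.wire
  | m + 1 =>
      LOPP.comp (castC (by omega) (LOPP.tens LOPP.swap (idPow m)))
        (castC (by omega) (LOPP.tens LOPP.wire (sigmaC m)))

/-- The equational theory LOPP: the smallest congruence (with respect to `∘` and `⊗`)
containing the structural equations of props and the axioms (A)–(G) of the paper. -/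
inductive LOPPeq : {m : ℕ} → LOPP m → LOPP m → Prop
  | refl {m} (C : LOPP m) : LOPPeq C C
  | symm {m} {C D : LOPP m} : LOPPeq C D → LOPPeq D C
  | trans {m} {C D E : LOPP m} : LOPPeq C D → LOPPeq D E → LOPPeq C E
  | compCongr {m} {C₂ D₂ C₁ D₁ : LOPP m} :
      LOPPeq C₂ D₂ → LOPPeq C₁ D₁ → LOPPeq (C₂.comp C₁) (D₂.comp D₁)
  | tensCongr {m₁ m₂} {C₁ D₁ : LOPP m₁} {C₂ D₂ : LOPP m₂} :
      LOPPeq C₁ D₁ → LOPPeq C₂ D₂ → LOPPeq (C₁.tens C₂) (D₁.tens D₂)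
  -- structural equations
  | idComp {m} (C : LOPP m) : LOPPeq ((idPow m).comp C) C
  | compId {m} (C : LOPP m) : LOPPeq (C.comp (idPow m)) C
  | compAssoc {m} (C₃ C₂ C₁ : LOPP m) :
      LOPPeq ((C₃.comp C₂).comp C₁) (C₃.comp (C₂.comp C₁))
  | emptyTens {m} (C : LOPP m) : LOPPeq (castC (Nat.zero_add m) (LOPP.empty.tens C)) C
  | tensEmpty {m} (C : LOPP m) : LOPPeq (C.tens LOPP.empty) C
  | tensAssoc {m₁ m₂ m₃} (C₁ : LOPP m₁) (C₂ : LOPP m₂) (C₃ : LOPP m₃) :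
      LOPPeq (castC (Nat.add_assoc m₁ m₂ m₃) ((C₁.tens C₂).tens C₃))
        (C₁.tens (C₂.tens C₃))
  | interchange {m₁ m₂} (C₂ C₁ : LOPP m₁) (C₄ C₃ : LOPP m₂) :
      LOPPeq ((C₂.comp C₁).tens (C₄.comp C₃)) ((C₂.tens C₄).comp (C₁.tens C₃))
  | swapNat {m} (C : LOPP m) :
      LOPPeq ((sigmaC m).comp (C.tens LOPP.wire))
        ((castC (Nat.add_comm 1 m) (LOPP.wire.tens C)).comp (sigmaC m))
  | swapSwap : LOPPeq (LOPP.swap.comp LOPP.swap) (LOPP.wire.tens LOPP.wire)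
  -- axiom (A)
  | phaseZero : LOPPeq (LOPP.phase 0) LOPP.wire
  | phaseTwoPi : LOPPeq (LOPP.phase (2 * Real.pi)) LOPP.wire
  -- axiom (B)
  | bsZero : LOPPeq (LOPP.bs 0) (LOPP.wire.tens LOPP.wire)
  -- axiom (C)
  | swapDef : LOPPeq LOPP.swap
      (((LOPP.phase (-(Real.pi / 2))).tens (LOPP.phase (-(Real.pi / 2)))).comp
        (LOPP.bs (Real.pi / 2)))
  -- axiom (D)
  | phaseAdd (φ₁ φ₂ : ℝ) :
      LOPPeq ((LOPP.phase φ₂).comp (LOPP.phase φ₁)) (LOPP.phase (φ₁ + φ₂))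
  -- axiom (E)
  | bsPhase (θ φ : ℝ) :
      LOPPeq ((LOPP.bs θ).comp ((LOPP.phase φ).tens (LOPP.phase φ)))
        (((LOPP.phase φ).tens (LOPP.phase φ)).comp (LOPP.bs θ))
  -- axiom (F): the parameters β are the unique ones satisfying the side conditions
  -- for which both sides have the same interpretation
  | euler2 (α₁ α₂ α₃ β₁ β₂ β₃ β₄ : ℝ)
      (h₁ : β₁ ∈ Set.Ico 0 Real.pi) (h₂ : β₂ ∈ Set.Ico 0 Real.pi)
      (h₃ : β₃ ∈ Set.Ico 0 (2 * Real.pi)) (h₄ : β₄ ∈ Set.Ico 0 (2 * Real.pi))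
      (h₅ : (β₂ = 0 ∨ β₂ = Real.pi / 2) → β₁ = 0)
      (hsem :
        sem ((LOPP.bs α₃).comp (((LOPP.phase α₂).tens LOPP.wire).comp (LOPP.bs α₁)))
          = sem (((LOPP.phase β₃).tens (LOPP.phase β₄)).comp
              ((LOPP.bs β₂).comp ((LOPP.phase β₁).tens LOPP.wire)))) :
      LOPPeq ((LOPP.bs α₃).comp (((LOPP.phase α₂).tens LOPP.wire).comp (LOPP.bs α₁)))
        (((LOPP.phase β₃).tens (LOPP.phase β₄)).comp
          ((LOPP.bs β₂).comp ((LOPP.phase β₁).tens LOPP.wire)))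
  -- axiom (G)
  | euler3 (γ₁ γ₂ γ₃ γ₄ δ₁ δ₂ δ₃ δ₄ δ₅ δ₆ δ₇ δ₈ δ₉ : ℝ)
      (h₁ : δ₁ ∈ Set.Ico 0 Real.pi) (h₂ : δ₂ ∈ Set.Ico 0 Real.pi)
      (h₃ : δ₃ ∈ Set.Ico 0 Real.pi) (h₄ : δ₄ ∈ Set.Ico 0 Real.pi)
      (h₅ : δ₅ ∈ Set.Ico 0 Real.pi) (h₆ : δ₆ ∈ Set.Ico 0 Real.pi)
      (h₇ : δ₇ ∈ Set.Ico 0 (2 * Real.pi)) (h₈ : δ₈ ∈ Set.Ico 0 (2 * Real.pi))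
      (h₉ : δ₉ ∈ Set.Ico 0 (2 * Real.pi))
      (h₁₃ : (δ₃ = 0 ∨ δ₃ = Real.pi / 2) → δ₁ = 0)
      (h₂₄ : (δ₄ = 0 ∨ δ₄ = Real.pi / 2) → δ₂ = 0)
      (h₃₄ : δ₄ = 0 → δ₃ = 0)
      (h₅₆ : (δ₆ = 0 ∨ δ₆ = Real.pi / 2) → δ₅ = 0)
      (hsem :
        sem (((LOPP.bs γ₄).tens LOPP.wire).comp
            ((LOPP.wire.tens (LOPP.bs γ₃)).comp
              ((((LOPP.phase γ₂).tens LOPP.wire).tens LOPP.wire).comp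
                ((LOPP.bs γ₁).tens LOPP.wire))))
          = sem ((LOPP.wire.tens (LOPP.wire.tens (LOPP.phase δ₉))).comp
              ((LOPP.wire.tens ((LOPP.phase δ₈).tens LOPP.wire)).comp
                ((((LOPP.phase δ₇).tens LOPP.wire).tens LOPP.wire).comp
                  ((LOPP.wire.tens (LOPP.bs δ₆)).comp
                    ((LOPP.wire.tens ((LOPP.phase δ₅).tens LOPP.wire)).comp
                      (((LOPP.bs δ₄).tens LOPP.wire).comp
                        ((LOPP.wire.tens (LOPP.bs δ₃)).comp
                          ((((LOPP.phase δ₂).tens LOPP.wire).tens LOPP.wire).comp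
                            (LOPP.wire.tens ((LOPP.phase δ₁).tens LOPP.wire))))))))))) :
      LOPPeq
        (((LOPP.bs γ₄).tens LOPP.wire).comp
          ((LOPP.wire.tens (LOPP.bs γ₃)).comp
            ((((LOPP.phase γ₂).tens LOPP.wire).tens LOPP.wire).comp
              ((LOPP.bs γ₁).tens LOPP.wire))))
        ((LOPP.wire.tens (LOPP.wire.tens (LOPP.phase δ₉))).comp
          ((LOPP.wire.tens ((LOPP.phase δ₈).tens LOPP.wire)).comp
            ((((LOPP.phase δ₇).tens LOPP.wire).tens LOPP.wire).comp
              ((LOPP.wire.tens (LOPP.bs δ₆)).comp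
                ((LOPP.wire.tens ((LOPP.phase δ₅).tens LOPP.wire)).comp
                  (((LOPP.bs δ₄).tens LOPP.wire).comp
                    ((LOPP.wire.tens (LOPP.bs δ₃)).comp
                      ((((LOPP.phase δ₂).tens LOPP.wire).tens LOPP.wire).comp
                        (LOPP.wire.tens ((LOPP.phase δ₁).tens LOPP.wire))))))))))

/-!
Soundness is an induction on derivations. For completeness, the classes of `m`-mode circuits modulo
provable equality form a group on which the interpretation is a homomorphism, so it suffices that
only the trivial class is interpreted as the identity matrix. Axiom (F) brings two-mode classes to
the form of a Givens rotation followed by phases, and axiom (G) then allows interactions to be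
reordered until the first mode takes part in only one of them: every class on `k + 2` modes is a
product `shift A * padTwo k X * shift B`, where `shift` acts on the last `k + 1` modes and
`padTwo k` on the first two. If such a product is interpreted as the identity, its first row forces
`X` to be a phase on the second mode; then the whole class acts on the last `k + 1` modes only, and
induction on the number of modes applies.
-/

section DirectSum

variable {R : Type*} {m n k : ℕ}

/-- The direct sum `A ⊕ B` of two square matrices, indexed as the semantics of `LOPP.tens`. -/
def dirSum [Zero R] (A : Matrix (Fin m) (Fin m) R) (B : Matrix (Fin n) (Fin n) R) :
    Matrix (Fin (m + n)) (Fin (m + n)) R :=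
  reindex finSumFinEquiv finSumFinEquiv (fromBlocks A 0 0 B)

section Entries

variable [Zero R] (A : Matrix (Fin m) (Fin m) R) (B : Matrix (Fin n) (Fin n) R)

@[simp]
lemma dirSum_castAdd_castAdd (i j : Fin m) : dirSum A B (i.castAdd n) (j.castAdd n) = A i j := by
  simp [dirSum]

@[simp]
lemma dirSum_castAdd_natAdd (i : Fin m) (j : Fin n) :
    dirSum A B (i.castAdd n) (j.natAdd m) = 0 := by
  simp [dirSum]

@[simp]
lemma dirSum_natAdd_castAdd (i : Fin n) (j : Fin m) :
    dirSum A B (i.natAdd m) (j.castAdd n) = 0 := by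
  simp [dirSum]

@[simp]
lemma dirSum_natAdd_natAdd (i j : Fin n) : dirSum A B (i.natAdd m) (j.natAdd m) = B i j := by
  simp [dirSum]

lemma dirSum_submatrix_finAddFlip :
    (dirSum B A).submatrix finAddFlip finAddFlip = dirSum A B := by
  ext i j
  induction i using Fin.addCases <;> induction j using Fin.addCases <;> simp

lemma dirSum_assoc (C : Matrix (Fin k) (Fin k) R) :
    (dirSum (dirSum A B) C).submatrix (finCongr (Nat.add_assoc m n k).symm)
      (finCongr (Nat.add_assoc m n k).symm) = dirSum A (dirSum B C) := by
  have cast_left (i : Fin m) : Fin.cast (Nat.add_assoc m n k).symm (i.castAdd (n + k)) =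
      (i.castAdd n).castAdd k := rfl
  have cast_middle (i : Fin n) : Fin.cast (Nat.add_assoc m n k).symm ((i.castAdd k).natAdd m) =
      (i.natAdd m).castAdd k := rfl
  have cast_right (i : Fin k) : Fin.cast (Nat.add_assoc m n k).symm ((i.natAdd n).natAdd m) =
      i.natAdd (m + n) := Fin.ext (Nat.add_assoc m n i).symm
  ext i j
  refine Fin.addCases (fun i ↦ ?_) (Fin.addCases (fun i ↦ ?_) (fun i ↦ ?_)) i <;>
  refine Fin.addCases (fun j ↦ ?_) (Fin.addCases (fun j ↦ ?_) (fun j ↦ ?_)) j <;>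
  simp only [submatrix_apply, finCongr_apply, cast_left, cast_middle, cast_right,
    dirSum_castAdd_castAdd, dirSum_castAdd_natAdd, dirSum_natAdd_castAdd, dirSum_natAdd_natAdd]

end Entries

@[simp]
lemma dirSum_one_one [Zero R] [One R] :
    dirSum (1 : Matrix (Fin m) (Fin m) R) (1 : Matrix (Fin n) (Fin n) R) = 1 := by
  simp [dirSum]

lemma dirSum_mul_dirSum [NonUnitalNonAssocSemiring R] (A A' : Matrix (Fin m) (Fin m) R)
    (B B' : Matrix (Fin n) (Fin n) R) :
    dirSum A B * dirSum A' B' = dirSum (A * A') (B * B') := by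
  simp [dirSum, fromBlocks_multiply, submatrix_mul_equiv]

lemma star_dirSum [AddMonoid R] [StarAddMonoid R] (A : Matrix (Fin m) (Fin m) R)
    (B : Matrix (Fin n) (Fin n) R) : star (dirSum A B) = dirSum (star A) (star B) := by
  simp [dirSum, star_eq_conjTranspose, fromBlocks_conjTranspose]

lemma dirSum_mem_unitaryGroup [CommRing R] [StarRing R] {A : Matrix (Fin m) (Fin m) R}
    {B : Matrix (Fin n) (Fin n) R} (hA : A ∈ unitaryGroup (Fin m) R)
    (hB : B ∈ unitaryGroup (Fin n) R) : dirSum A B ∈ unitaryGroup (Fin (m + n)) R := by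
  rw [mem_unitaryGroup_iff] at *
  rw [star_dirSum, dirSum_mul_dirSum, hA, hB, dirSum_one_one]

end DirectSum

section BlockCons

variable {R : Type*} {n : ℕ}

/-- The block-diagonal matrix `z ⊕ W` with a scalar first block, indexed by `Fin (n + 1)` so that
its rows can be analysed by `Fin.cases`. -/
def blockCons [Zero R] (z : R) (W : Matrix (Fin n) (Fin n) R) :
    Matrix (Fin (n + 1)) (Fin (n + 1)) R :=
  of (vecCons (vecCons z 0) fun i ↦ vecCons 0 (W i))

section Entries

variable [Zero R] (z : R) (W : Matrix (Fin n) (Fin n) R) (i j : Fin n)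

@[simp]
lemma blockCons_zero_zero : blockCons z W 0 0 = z := rfl

@[simp]
lemma blockCons_zero_succ : blockCons z W 0 j.succ = 0 := rfl

@[simp]
lemma blockCons_succ_zero : blockCons z W i.succ 0 = 0 := rfl

@[simp]
lemma blockCons_succ_succ : blockCons z W i.succ j.succ = W i j := rfl

lemma submatrix_dirSum_eq_blockCons (A : Matrix (Fin 1) (Fin 1) R) :
    (dirSum A W).submatrix (finCongr (Nat.add_comm n 1)) (finCongr (Nat.add_comm n 1)) =
      blockCons (A 0 0) W := by
  have cast_succ (i : Fin n) : Fin.cast (Nat.add_comm n 1) i.succ = i.natAdd 1 :=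
    Fin.ext (Nat.add_comm i 1)
  have cast_zero : Fin.cast (Nat.add_comm n 1) 0 = (0 : Fin 1).castAdd n := rfl
  ext i j
  cases i using Fin.cases <;> cases j using Fin.cases <;>
    simp only [submatrix_apply, finCongr_apply, cast_zero, cast_succ, dirSum_castAdd_castAdd,
      dirSum_castAdd_natAdd, dirSum_natAdd_castAdd, dirSum_natAdd_natAdd, blockCons_zero_zero,
      blockCons_zero_succ, blockCons_succ_zero, blockCons_succ_succ]

end Entries

lemma blockCons_inj [Zero R] {z z' : R} {W W' : Matrix (Fin n) (Fin n) R} :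
    blockCons z W = blockCons z' W' ↔ z = z' ∧ W = W' := by
  refine ⟨fun h ↦ ⟨congr_fun₂ h 0 0, ?_⟩, by rintro ⟨rfl, rfl⟩; rfl⟩
  ext i j
  exact congr_fun₂ h i.succ j.succ

@[simp]
lemma blockCons_one_one [Zero R] [One R] : blockCons 1 (1 : Matrix (Fin n) (Fin n) R) = 1 := by
  ext i j
  cases i using Fin.cases <;> cases j using Fin.cases <;>
    simp [one_apply, (Fin.succ_ne_zero _).symm]

lemma blockCons_mul_blockCons [NonUnitalNonAssocSemiring R] (z z' : R)
    (W W' : Matrix (Fin n) (Fin n) R) :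
    blockCons z W * blockCons z' W' = blockCons (z * z') (W * W') := by
  ext i j
  cases i using Fin.cases <;> cases j using Fin.cases <;> simp [mul_apply, Fin.sum_univ_succ]

lemma star_blockCons [AddMonoid R] [StarAddMonoid R] (z : R) (W : Matrix (Fin n) (Fin n) R) :
    star (blockCons z W) = blockCons (star z) (star W) := by
  ext i j
  cases i using Fin.cases <;> cases j using Fin.cases <;> simp [star_apply]

section Unitary

variable [CommRing R] [StarRing R]

lemma blockCons_mem_unitaryGroup_iff {z : R} {W : Matrix (Fin n) (Fin n) R} :
    blockCons z W ∈ unitaryGroup (Fin (n + 1)) R ↔ z ∈ unitary R ∧ W ∈ unitaryGroup (Fin n) R := by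
  rw [mem_unitaryGroup_iff, mem_unitaryGroup_iff, star_blockCons, blockCons_mul_blockCons,
    ← blockCons_one_one, blockCons_inj, Unitary.mem_iff_self_mul_star]

lemma exists_eq_blockCons_of_zero_row {V : Matrix (Fin (n + 1)) (Fin (n + 1)) R}
    (hV : V ∈ unitaryGroup (Fin (n + 1)) R) (hrow : ∀ j : Fin n, V 0 j.succ = 0) :
    ∃ z ∈ unitary R, ∃ W ∈ unitaryGroup (Fin n) R, V = blockCons z W := by
  have entry (i : Fin (n + 1)) :
      V i 0 * star (V 0 0) = (1 : Matrix (Fin (n + 1)) (Fin (n + 1)) R) i 0 := by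
    rw [← mem_unitaryGroup_iff.mp hV, mul_apply, Fin.sum_univ_succ]
    simp [star_apply, hrow]
  have hz : V 0 0 * star (V 0 0) = 1 := by simpa using entry 0
  have hcol (i : Fin n) : V i.succ 0 = 0 := by
    calc V i.succ 0 = V i.succ 0 * star (V 0 0) * V 0 0 := by
          rw [mul_assoc, mul_comm (star _), hz, mul_one]
      _ = 0 := by simp [entry]
  have hblock : V = blockCons (V 0 0) (V.submatrix Fin.succ Fin.succ) := by
    ext i j
    cases i using Fin.cases <;> cases j using Fin.cases <;> simp [hrow, hcol]
  rw [hblock, blockCons_mem_unitaryGroup_iff] at hV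
  exact ⟨_, hV.1, _, hV.2, hblock⟩

lemma exists_eq_blockCons_mul {U M : Matrix (Fin (n + 1)) (Fin (n + 1)) R}
    (hU : U ∈ unitaryGroup (Fin (n + 1)) R) (hM : M ∈ unitaryGroup (Fin (n + 1)) R) {w : R}
    (hrow : U 0 = w • M 0) :
    ∃ z ∈ unitary R, ∃ W ∈ unitaryGroup (Fin n) R, U = blockCons z W * M := by
  have hzero (j : Fin n) : (U * star M) 0 j.succ = 0 := by
    calc (U * star M) 0 j.succ = w * (M * star M) 0 j.succ := by
          simp [mul_apply, hrow, Finset.mul_sum, mul_assoc]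
      _ = 0 := by rw [mem_unitaryGroup_iff.mp hM, one_apply_ne (Fin.succ_ne_zero j).symm, mul_zero]
  obtain ⟨z, hz, W, hW, h⟩ :=
    exists_eq_blockCons_of_zero_row (mul_mem hU (Unitary.star_mem hM)) hzero
  exact ⟨z, hz, W, hW, by rw [← h, mul_assoc, mem_unitaryGroup_iff'.mp hM, mul_one]⟩

end Unitary

end BlockCons

/-! ## Soundness -/

section Semantics

variable {m n : ℕ}

lemma sem_castC (h : m = n) (C : LOPP m) :
    sem (castC h C) = (sem C).submatrix (finCongr h.symm) (finCongr h.symm) := by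
  subst h
  rfl

lemma sem_tens (C : LOPP m) (D : LOPP n) : sem (C.tens D) = dirSum (sem C) (sem D) := rfl

lemma sem_comp (C D : LOPP m) : sem (C.comp D) = sem C * sem D := rfl

lemma sem_wire : sem LOPP.wire = 1 := rfl

lemma sem_idPow (m : ℕ) : sem (idPow m) = 1 := by
  induction m with
  | zero => rfl
  | succ m ih => rw [idPow, sem_tens, ih, sem, dirSum_one_one]

lemma sem_castC_wire_tens (C : LOPP n) :
    sem (castC (Nat.add_comm 1 n) (LOPP.wire.tens C)) = blockCons 1 (sem C) := by
  rw [sem_castC, sem_tens, submatrix_dirSum_eq_blockCons]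
  simp [sem]

lemma sem_castC_swap_tens (h : 2 + m = m + 2) :
    sem (castC h (LOPP.swap.tens (idPow m))) = (Equiv.swap 0 1).permMatrix ℂ := by
  have cast_zero : Fin.cast h.symm 0 = (0 : Fin 2).castAdd m := rfl
  have cast_one : Fin.cast h.symm (Fin.succ 0) = (1 : Fin 2).castAdd m := rfl
  have cast_succ (i : Fin m) : Fin.cast h.symm i.succ.succ = i.natAdd 2 :=
    Fin.ext (Nat.add_comm i 2)
  have one_ne (i : Fin m) : (1 : Fin (m + 2)) ≠ i.succ.succ :=
    fun h ↦ (Fin.succ_ne_zero i).symm (Fin.succ_injective _ h)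
  have swap_succ (i : Fin m) : Equiv.swap 0 1 i.succ.succ = i.succ.succ :=
    Equiv.swap_apply_of_ne_of_ne (Fin.succ_ne_zero _) (one_ne i).symm
  rw [sem_castC, sem_tens, sem_idPow]
  ext i j
  refine Fin.cases ?_ (Fin.cases ?_ fun i ↦ ?_) i <;>
  refine Fin.cases ?_ (Fin.cases ?_ fun j ↦ ?_) j <;>
  simp only [submatrix_apply, finCongr_apply, cast_zero, cast_one, cast_succ,
    dirSum_castAdd_castAdd, dirSum_castAdd_natAdd, dirSum_natAdd_castAdd, dirSum_natAdd_natAdd,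
    Equiv.Perm.permMatrix, PEquiv.toMatrix_apply, Equiv.toPEquiv_apply, Option.mem_some_iff] <;>
  simp [sem, one_apply, swap_succ, one_ne, (one_ne _).symm, (Fin.succ_ne_zero _).symm]

lemma blockCons_one_permMatrix {R : Type*} [Zero R] [One R] (σ : Equiv.Perm (Fin n)) :
    blockCons 1 (σ.permMatrix R) = (Equiv.Perm.decomposeFin.symm (0, σ)).permMatrix R := by
  ext i j
  cases i using Fin.cases <;> cases j using Fin.cases <;>
    simp [Equiv.Perm.permMatrix, PEquiv.toMatrix_apply, (Fin.succ_ne_zero _).symm]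

lemma finRotate_add_two_inv (m : ℕ) :
    (finRotate (m + 2))⁻¹ =
      Equiv.Perm.decomposeFin.symm (0, (finRotate (m + 1))⁻¹) * Equiv.swap 0 1 := by
  have key : Equiv.Perm.decomposeFin.symm (1, finRotate (m + 1)) *
      Equiv.Perm.decomposeFin.symm (0, (finRotate (m + 1))⁻¹) = Equiv.swap 0 1 := by
    ext i
    cases i using Fin.cases <;> simp
  rw [inv_eq_iff_mul_eq_one, finRotate_succ_eq_decomposeFin, ← mul_assoc, key,
    Equiv.swap_mul_self]

lemma sem_sigmaC (m : ℕ) : sem (sigmaC m) = (finRotate (m + 1))⁻¹.permMatrix ℂ := by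
  induction m with
  | zero => rw [sigmaC, sem, finRotate_one, ← Equiv.Perm.one_def, inv_one, permMatrix_one]
  | succ m ih =>
    rw [sigmaC, sem, sem_castC_swap_tens, sem_castC_wire_tens, ih, blockCons_one_permMatrix,
      ← permMatrix_mul, finRotate_add_two_inv]

lemma sem_sigmaC_mul_sem_tens_wire (C : LOPP m) :
    sem (sigmaC m) * sem (C.tens LOPP.wire) =
      sem (castC (Nat.add_comm 1 m) (LOPP.wire.tens C)) * sem (sigmaC m) := by
  rw [sem_sigmaC, Equiv.Perm.permMatrix, PEquiv.toMatrix_toPEquiv_mul,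
    PEquiv.mul_toMatrix_toPEquiv, sem_castC, sem_tens, sem_tens,
    ← dirSum_submatrix_finAddFlip (sem C)]
  ext i j
  obtain ⟨i, rfl⟩ := (finRotate (m + 1)).surjective i
  simp only [submatrix_apply, Equiv.Perm.inv_def, Equiv.symm_apply_apply]
  rfl

lemma dirSum_fin_one {R : Type*} [Zero R] (a b : R) : dirSum !![a] !![b] = !![a, 0; 0, b] := by
  ext i j
  fin_cases i <;> fin_cases j <;> rfl

lemma fin_one_eq_one_iff {R : Type*} [Zero R] [One R] {a : R} : !![a] = 1 ↔ a = 1 := by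
  refine ⟨fun h ↦ congr_fun₂ h 0 0, ?_⟩
  rintro rfl
  ext i j
  obtain rfl := Subsingleton.elim i j
  simp

lemma sem_wire_tens_wire : sem (LOPP.wire.tens LOPP.wire) = !![1, 0; 0, 1] :=
  dirSum_one_one.trans one_fin_two

lemma sem_phase (φ : ℝ) : sem (LOPP.phase φ) = !![exp (φ * I)] := by
  ext i j
  simp [sem]

lemma sem_swap : sem LOPP.swap = !![0, 1; 1, 0] := rfl

lemma sem_bs (θ : ℝ) :
    sem (LOPP.bs θ) = !![cos θ, I * sin θ; I * sin θ, cos θ] := by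
  rw [sem, ofReal_cos, ofReal_sin]

theorem sem_eq_of_LOPPeq {C D : LOPP m} (h : LOPPeq C D) : sem C = sem D := by
  induction h with
  | refl C => rfl
  | symm _ ih => exact ih.symm
  | trans _ _ ih₁ ih₂ => exact ih₁.trans ih₂
  | compCongr _ _ ih₁ ih₂ => rw [sem, sem, ih₁, ih₂]
  | tensCongr _ _ ih₁ ih₂ => rw [sem, sem, ih₁, ih₂]
  | idComp C => rw [sem, sem_idPow, one_mul]
  | compId C => rw [sem, sem_idPow, mul_one]
  | compAssoc => simp only [sem, mul_assoc]
  | @emptyTens m C =>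
    have cast_eq (i : Fin m) : finCongr (Nat.zero_add m).symm i = i.natAdd 0 :=
      Fin.ext (Nat.zero_add i).symm
    ext i j
    rw [sem_castC, sem_tens, submatrix_apply, cast_eq, cast_eq, dirSum_natAdd_natAdd]
  | tensEmpty C =>
    ext i j
    exact dirSum_castAdd_castAdd (sem C) _ i j
  | tensAssoc C₁ C₂ C₃ =>
    rw [sem_castC]
    exact dirSum_assoc (sem C₁) (sem C₂) (sem C₃)
  | interchange => exact (dirSum_mul_dirSum _ _ _ _).symm
  | swapNat C => exact sem_sigmaC_mul_sem_tens_wire C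
  | swapSwap => simp [sem_comp, sem_wire_tens_wire, sem_swap]
  | phaseZero => simp [sem_phase, sem_wire, fin_one_eq_one_iff]
  | phaseTwoPi => simp [sem_phase, sem_wire, fin_one_eq_one_iff]
  | bsZero => simp [sem_wire_tens_wire, sem_bs]
  | swapDef =>
    have hexp : exp (-(Real.pi / 2 * I)) = -I := by
      rw [Complex.exp_neg, exp_pi_div_two_mul_I, inv_I]
    simp [sem_comp, sem_tens, sem_phase, dirSum_fin_one, sem_swap, sem_bs, hexp]
  | phaseAdd φ₁ φ₂ => simp [sem_comp, sem_phase, ← Complex.exp_add, add_mul, add_comm]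
  | bsPhase θ φ => simp [sem_comp, sem_tens, sem_phase, dirSum_fin_one, sem_bs, mul_comm]
  | euler2 => assumption
  | euler3 => assumption

lemma sem_mem_unitaryGroup (C : LOPP m) : sem C ∈ unitaryGroup (Fin m) ℂ := by
  induction C with
  | phase φ =>
    have hstar : star !![exp (φ * I)] = !![exp (-(φ * I))] := by
      ext i j
      simp [star_apply, ← exp_conj]
    rw [sem_phase, mem_unitaryGroup_iff, hstar]
    simp [← Complex.exp_add, fin_one_eq_one_iff]
  | bs θ =>
    have hstar : star !![cos θ, I * sin θ; I * sin θ, cos θ] =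
        !![cos θ, -(I * sin θ); -(I * sin θ), cos θ] := by
      ext i j
      fin_cases i <;> fin_cases j <;> simp [star_apply, ← cos_conj, ← sin_conj]
    have hone : cos θ * cos θ - I * sin θ * (I * sin θ) = 1 := by
      linear_combination cos_sq_add_sin_sq (θ : ℂ) - sin θ ^ 2 * I_sq
    rw [sem_bs, mem_unitaryGroup_iff, hstar]
    simp [one_fin_two, ← sub_eq_add_neg, neg_add_eq_sub, hone, mul_comm (cos (θ : ℂ))]
  | wire => exact one_mem _
  | swap =>
    have hstar : star !![0, 1; 1, 0] = (!![0, 1; 1, 0] : Matrix (Fin 2) (Fin 2) ℂ) := by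
      ext i j
      fin_cases i <;> fin_cases j <;> simp [star_apply]
    rw [sem_swap, mem_unitaryGroup_iff, hstar]
    simp [one_fin_two]
  | empty => exact one_mem _
  | comp C D ihC ihD => exact mul_mem ihC ihD
  | tens C D ihC ihD => exact dirSum_mem_unitaryGroup ihC ihD

end Semantics

/-! ## Circuits modulo the equational theory -/

/-- Provable equality of `m`-mode circuits as a setoid. -/
def loppSetoid (m : ℕ) : Setoid (LOPP m) :=
  ⟨LOPPeq, LOPPeq.refl, LOPPeq.symm, LOPPeq.trans⟩

/-- The `m`-mode circuits modulo provable equality. -/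
def LOPPClass (m : ℕ) : Type := Quotient (loppSetoid m)

namespace LOPPClass

open scoped Real

variable {l m n k : ℕ}

/-- The class of a circuit. -/
def mk (C : LOPP m) : LOPPClass m := Quotient.mk (loppSetoid m) C

lemma mk_eq_mk {C D : LOPP m} : mk C = mk D ↔ LOPPeq C D := Quotient.eq

lemma mk_surjective : Function.Surjective (mk : LOPP m → LOPPClass m) := Quotient.exists_rep

instance : Monoid (LOPPClass m) where
  one := mk (idPow m)
  mul := Quotient.map₂ LOPP.comp fun _ _ h _ _ h' ↦ h.compCongr h'
  mul_assoc := by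
    rintro ⟨x⟩ ⟨y⟩ ⟨z⟩
    exact mk_eq_mk.mpr (.compAssoc x y z)
  one_mul := by
    rintro ⟨x⟩
    exact mk_eq_mk.mpr (.idComp x)
  mul_one := by
    rintro ⟨x⟩
    exact mk_eq_mk.mpr (.compId x)

lemma mk_idPow : mk (idPow m) = 1 := rfl

lemma mk_comp (C D : LOPP m) : mk (C.comp D) = mk C * mk D := rfl

/-- The interpretation of a class of circuits. -/
def eval : LOPPClass m →* Matrix (Fin m) (Fin m) ℂ where
  toFun := Quotient.lift sem fun _ _ ↦ sem_eq_of_LOPPeq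
  map_one' := sem_idPow m
  map_mul' := by
    rintro ⟨x⟩ ⟨y⟩
    rfl

lemma eval_mk (C : LOPP m) : eval (mk C) = sem C := rfl

lemma eval_mem_unitaryGroup (x : LOPPClass m) : eval x ∈ unitaryGroup (Fin m) ℂ := by
  obtain ⟨C, rfl⟩ := mk_surjective x
  exact sem_mem_unitaryGroup C

section Tens

/-- Parallel composition of classes. -/
def tens : LOPPClass m → LOPPClass n → LOPPClass (m + n) :=
  Quotient.map₂ LOPP.tens fun _ _ h _ _ h' ↦ h.tensCongr h'

lemma mk_tens (C : LOPP m) (D : LOPP n) : mk (C.tens D) = tens (mk C) (mk D) := rfl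

lemma tens_mul_tens (x x' : LOPPClass m) (y y' : LOPPClass n) :
    tens x y * tens x' y' = tens (x * x') (y * y') := by
  obtain ⟨C, rfl⟩ := mk_surjective x
  obtain ⟨C', rfl⟩ := mk_surjective x'
  obtain ⟨D, rfl⟩ := mk_surjective y
  obtain ⟨D', rfl⟩ := mk_surjective y'
  exact (mk_eq_mk.mpr (.interchange C C' D D')).symm

/-- Transport of classes along an equality of mode numbers. -/
def castModes (h : m = n) : LOPPClass m ≃* LOPPClass n := MulEquiv.cast h

lemma mk_castC (h : m = n) (C : LOPP m) : mk (castC h C) = castModes h (mk C) := by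
  subst h
  rfl

@[simp]
lemma castModes_rfl (x : LOPPClass m) : castModes rfl x = x := rfl

@[simp]
lemma castModes_castModes (h : l = m) (h' : m = n) (x : LOPPClass l) :
    castModes h' (castModes h x) = castModes (h.trans h') x := by
  subst h h'
  rfl

lemma castModes_tens (h : m = n) (x : LOPPClass m) (y : LOPPClass k) :
    tens (castModes h x) y = castModes (congrArg (· + k) h) (tens x y) := by
  subst h
  rfl

lemma tens_castModes (h : m = n) (x : LOPPClass k) (y : LOPPClass m) :
    tens x (castModes h y) = castModes (congrArg (k + ·) h) (tens x y) := by
  subst h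
  rfl

lemma tens_assoc (x : LOPPClass m) (y : LOPPClass n) (z : LOPPClass k) :
    castModes (Nat.add_assoc m n k) (tens (tens x y) z) = tens x (tens y z) := by
  obtain ⟨C, rfl⟩ := mk_surjective x
  obtain ⟨D, rfl⟩ := mk_surjective y
  obtain ⟨E, rfl⟩ := mk_surjective z
  rw [← mk_tens, ← mk_tens, ← mk_castC]
  exact mk_eq_mk.mpr (.tensAssoc C D E)

lemma tens_tens (x : LOPPClass m) (y : LOPPClass n) (z : LOPPClass k) :
    tens (tens x y) z = castModes (Nat.add_assoc m n k).symm (tens x (tens y z)) := by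
  rw [← tens_assoc, castModes_castModes, castModes_rfl]

lemma one_tens (x : LOPPClass m) :
    tens (1 : LOPPClass 0) x = castModes (Nat.zero_add m).symm x := by
  obtain ⟨C, rfl⟩ := mk_surjective x
  have hmk : castModes (Nat.zero_add m) (tens 1 (mk C)) = mk C := by
    rw [← mk_idPow, ← mk_tens, ← mk_castC]
    exact mk_eq_mk.mpr (.emptyTens C)
  rw [← congrArg (castModes (Nat.zero_add m).symm) hmk, castModes_castModes, castModes_rfl]

lemma tens_one (x : LOPPClass m) : tens x (1 : LOPPClass 0) = x := by
  obtain ⟨C, rfl⟩ := mk_surjective x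
  exact mk_eq_mk.mpr (.tensEmpty C)

lemma mk_wire : mk LOPP.wire = 1 :=
  (mk_eq_mk.mpr (.emptyTens LOPP.wire)).symm

lemma one_tens_wire (m : ℕ) : tens (1 : LOPPClass m) (1 : LOPPClass 1) = 1 := by
  rw [← mk_wire]
  rfl

lemma one_tens_one (m n : ℕ) : tens (1 : LOPPClass m) (1 : LOPPClass n) = 1 := by
  induction n with
  | zero => exact tens_one 1
  | succ n ih => rw [← one_tens_wire n, ← tens_assoc, ih, one_tens_wire, map_one]

lemma tens_eq_mul (x : LOPPClass m) (y : LOPPClass n) : tens x y = tens x 1 * tens 1 y := by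
  rw [tens_mul_tens, mul_one, one_mul]

lemma tens_one_commute_one_tens (x : LOPPClass m) (y : LOPPClass n) :
    Commute (tens x (1 : LOPPClass n)) (tens (1 : LOPPClass m) y) := by
  rw [commute_iff_eq, tens_mul_tens, tens_mul_tens, one_mul, mul_one, one_mul, mul_one]

end Tens

section PadShift

/-- Parallel composition with an identity wire on the last mode. -/
def pad : LOPPClass n →* LOPPClass (n + 1) where
  toFun x := tens x (1 : LOPPClass 1)
  map_one' := one_tens_wire n
  map_mul' x y := by rw [tens_mul_tens, mul_one]

/-- Parallel composition with an identity wire on the first mode, the other modes being renumbered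
so that `shift` has the same codomain as `pad`. -/
def shift : LOPPClass n →* LOPPClass (n + 1) where
  toFun x := castModes (Nat.add_comm 1 n) (tens (1 : LOPPClass 1) x)
  map_one' := by rw [one_tens_one, map_one]
  map_mul' x y := by rw [← map_mul, tens_mul_tens, mul_one]

lemma pad_apply (x : LOPPClass n) : pad x = tens x (1 : LOPPClass 1) := rfl

lemma shift_apply (x : LOPPClass n) :
    shift x = castModes (Nat.add_comm 1 n) (tens (1 : LOPPClass 1) x) := rfl

lemma shift_pad (x : LOPPClass n) : shift (pad x) = pad (shift x) := by
  rw [shift_apply, pad_apply, pad_apply, shift_apply, castModes_tens, ← tens_assoc,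
    castModes_castModes]

lemma eval_pad (x : LOPPClass n) :
    eval (pad x) = dirSum (eval x) (1 : Matrix (Fin 1) (Fin 1) ℂ) := by
  obtain ⟨C, rfl⟩ := mk_surjective x
  rw [pad_apply, ← mk_wire]
  rfl

lemma eval_shift (x : LOPPClass n) : eval (shift x) = blockCons 1 (eval x) := by
  obtain ⟨C, rfl⟩ := mk_surjective x
  rw [shift_apply, ← mk_wire, ← mk_tens, ← mk_castC, eval_mk, sem_castC_wire_tens, eval_mk]

/-- A two-mode class acting on the first two of `k + 2` modes. -/
def padTwo : (k : ℕ) → LOPPClass 2 →* LOPPClass (k + 2)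
  | 0 => MonoidHom.id _
  | k + 1 => pad.comp (padTwo k)

lemma padTwo_zero (x : LOPPClass 2) : padTwo 0 x = x := rfl

lemma padTwo_succ (k : ℕ) (x : LOPPClass 2) : padTwo (k + 1) x = pad (padTwo k x) := rfl

lemma padTwo_eq_castModes_tens (k : ℕ) (x : LOPPClass 2) :
    padTwo k x = castModes (Nat.add_comm 2 k) (tens x (1 : LOPPClass k)) := by
  induction k with
  | zero => rw [tens_one, castModes_rfl, padTwo_zero]
  | succ k ih =>
    rw [padTwo_succ, ih, pad_apply, castModes_tens, tens_tens, castModes_castModes, one_tens_wire]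

lemma shift_shift_eq_castModes_tens (x : LOPPClass k) :
    shift (shift x) = castModes (Nat.add_comm 2 k) (tens (1 : LOPPClass 2) x) := by
  rw [shift_apply, shift_apply, tens_castModes, ← tens_assoc, one_tens_one, castModes_castModes,
    castModes_castModes]

lemma padTwo_commute_shift_shift (x : LOPPClass 2) (y : LOPPClass k) :
    Commute (padTwo k x) (shift (shift y)) := by
  rw [padTwo_eq_castModes_tens, shift_shift_eq_castModes_tens]
  exact (tens_one_commute_one_tens x y).map _

lemma pad_pad_commute_shift (x : LOPPClass 1) (y : LOPPClass 2) :
    Commute (pad (pad x)) (shift y) := by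
  have h : pad (pad x) = tens x (1 : LOPPClass 2) := by
    rw [pad_apply, pad_apply, ← one_tens_wire 1, ← tens_assoc, castModes_rfl]
  rw [h]
  exact tens_one_commute_one_tens x y

end PadShift

/-! ## Generators -/

/-- The class of a phase shifter. -/
def phase (φ : ℝ) : LOPPClass 1 := mk (.phase φ)

/-- The class of a beam splitter. -/
def bs (θ : ℝ) : LOPPClass 2 := mk (.bs θ)

/-- Two parallel phase shifters. -/
def phases (a b : ℝ) : LOPPClass 2 := tens (phase a) (phase b)

lemma phases_eq_pad_mul_shift (a b : ℝ) : phases a b = pad (phase a) * shift (phase b) :=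
  tens_eq_mul _ _

section Induction

variable {P : ∀ m, LOPPClass m → Prop}

lemma castModes_induction (h : m = n) {x : LOPPClass m} (hx : P m x) : P n (castModes h x) := by
  subst h
  exact hx

lemma tens_one_induction (pad : ∀ m (x : LOPPClass m), P m x → P (m + 1) (pad x))
    {x : LOPPClass m} (hx : P m x) : P (m + n) (tens x 1) := by
  induction n with
  | zero => rwa [tens_one]
  | succ n ih =>
    rw [← one_tens_wire, ← tens_assoc]
    exact castModes_induction _ (pad _ _ ih)

lemma one_tens_induction (shift : ∀ m (x : LOPPClass m), P m x → P (m + 1) (shift x))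
    {x : LOPPClass n} (hx : P n x) : P (m + n) (tens 1 x) := by
  induction m with
  | zero =>
    rw [one_tens]
    exact castModes_induction _ hx
  | succ m ih =>
    have h := castModes_induction (Nat.add_right_comm m n 1) (shift _ _ ih)
    rw [shift_apply, ← tens_assoc, one_tens_one, castModes_castModes, castModes_castModes] at h
    rwa [← map_one (castModes (Nat.add_comm 1 m)), castModes_tens]

theorem induction_on (one : ∀ m, P m 1)
    (mul : ∀ m (x y : LOPPClass m), P m x → P m y → P m (x * y))
    (pad : ∀ m (x : LOPPClass m), P m x → P (m + 1) (pad x))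
    (shift : ∀ m (x : LOPPClass m), P m x → P (m + 1) (shift x))
    (phase : ∀ φ, P 1 (phase φ)) (bs : ∀ θ, P 2 (bs θ)) (x : LOPPClass m) : P m x := by
  have tens {k l : ℕ} (y : LOPPClass k) (z : LOPPClass l) (hy : P k y) (hz : P l z) :
      P (k + l) (tens y z) := by
    rw [tens_eq_mul]
    exact mul _ _ _ (tens_one_induction pad hy) (one_tens_induction shift hz)
  obtain ⟨C, rfl⟩ := mk_surjective x
  induction C with
  | phase φ => exact phase φ
  | bs θ => exact bs θ
  | wire => exact mk_wire ▸ one 1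
  | swap =>
    rw [mk_eq_mk.mpr LOPPeq.swapDef]
    exact mul _ _ _ (tens _ _ (phase _) (phase _)) (bs _)
  | empty => exact one 0
  | comp C D hC hD => exact mul _ _ _ hC hD
  | tens C D hC hD => exact tens _ _ hC hD

end Induction

lemma eq_one_of_modes_zero (x : LOPPClass 0) : x = 1 := by
  suffices ∀ m (x : LOPPClass m) (h : m = 0), castModes h x = 1 from this 0 x rfl
  intro m x
  induction x using induction_on with
  | one => exact fun h ↦ map_one _
  | mul m x y hx hy => exact fun h ↦ by rw [map_mul, hx h, hy h, one_mul]
  | pad | shift | phase | bs => omega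

lemma phase_mul_phase (a b : ℝ) : phase a * phase b = phase (a + b) :=
  (mk_eq_mk.mpr (.phaseAdd b a)).trans (congrArg phase (add_comm b a))

lemma phase_zero : phase 0 = 1 :=
  (mk_eq_mk.mpr .phaseZero).trans mk_wire

lemma phase_periodic : Function.Periodic phase (2 * π) := fun φ ↦ by
  have htwo : phase (2 * π) = 1 := (mk_eq_mk.mpr .phaseTwoPi).trans mk_wire
  rw [← phase_mul_phase, htwo, mul_one]

lemma exists_eq_phase (x : LOPPClass 1) : ∃ φ, x = phase φ := by
  suffices ∀ m (x : LOPPClass m) (h : m = 1), ∃ φ, castModes h x = phase φ from this 1 x rfl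
  intro m x
  induction x using induction_on with
  | one => exact fun h ↦ ⟨0, by rw [map_one, phase_zero]⟩
  | mul m x y hx hy =>
    intro h
    obtain ⟨a, ha⟩ := hx h
    obtain ⟨b, hb⟩ := hy h
    exact ⟨a + b, by rw [map_mul, ha, hb, phase_mul_phase]⟩
  | pad m x | shift m x =>
    rintro h
    obtain rfl : m = 0 := by omega
    exact ⟨0, by rw [eq_one_of_modes_zero x, map_one, map_one, phase_zero]⟩
  | phase φ => exact fun h ↦ ⟨φ, rfl⟩
  | bs => omega

lemma phases_zero_right (a : ℝ) : phases a 0 = pad (phase a) := by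
  rw [phases_eq_pad_mul_shift, phase_zero, map_one, mul_one]

lemma phases_zero_left (b : ℝ) : phases 0 b = shift (phase b) := by
  rw [phases_eq_pad_mul_shift, phase_zero, map_one, one_mul]

lemma phases_zero_zero : phases 0 0 = 1 := by
  rw [phases_zero_left, phase_zero, map_one]

lemma phases_mul_phases (a b c d : ℝ) : phases a b * phases c d = phases (a + c) (b + d) := by
  rw [phases, phases, tens_mul_tens, phase_mul_phase, phase_mul_phase, phases]

lemma bs_zero : bs 0 = 1 := by
  rw [← one_tens_wire, ← mk_wire]
  exact mk_eq_mk.mpr .bsZero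

lemma bs_commute_phases (θ φ : ℝ) : Commute (bs θ) (phases φ φ) :=
  mk_eq_mk.mpr (.bsPhase θ φ)

theorem induction_two {Q : LOPPClass 2 → Prop} (phases : ∀ a b, Q (phases a b))
    (bs : ∀ θ, Q (bs θ)) (mul : ∀ x y, Q x → Q y → Q (x * y)) (x : LOPPClass 2) : Q x := by
  suffices ∀ m (x : LOPPClass m) (h : m = 2), Q (castModes h x) from this 2 x rfl
  intro m x
  induction x using induction_on with
  | one => exact fun h ↦ by simpa only [map_one, phases_zero_zero] using phases 0 0
  | mul m x y hx hy => exact fun h ↦ by simpa only [map_mul] using mul _ _ (hx h) (hy h)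
  | pad m x =>
    intro h
    obtain rfl : m = 1 := by omega
    obtain ⟨φ, rfl⟩ := exists_eq_phase x
    exact phases_zero_right φ ▸ phases φ 0
  | shift m x =>
    intro h
    obtain rfl : m = 1 := by omega
    obtain ⟨φ, rfl⟩ := exists_eq_phase x
    exact phases_zero_left φ ▸ phases 0 φ
  | phase => omega
  | bs θ => exact fun _ ↦ bs θ

theorem induction_add_three {Q : LOPPClass (n + 3) → Prop} (one : Q 1)
    (pad : ∀ x, Q (pad x)) (shift : ∀ x, Q (shift x)) (mul : ∀ x y, Q x → Q y → Q (x * y))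
    (x : LOPPClass (n + 3)) : Q x := by
  suffices ∀ m (x : LOPPClass m) (h : m = n + 3), Q (castModes h x) from this _ x rfl
  intro m x
  induction x using induction_on with
  | one => exact fun h ↦ by rwa [map_one]
  | mul m x y hx hy => exact fun h ↦ by simpa only [map_mul] using mul _ _ (hx h) (hy h)
  | pad m x =>
    intro h
    obtain rfl : m = n + 2 := by omega
    exact pad x
  | shift m x =>
    intro h
    obtain rfl : m = n + 2 := by omega
    exact shift x
  | phase | bs => omega

lemma eval_phase (φ : ℝ) : eval (phase φ) = !![exp (φ * I)] := sem_phase φ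

lemma eval_phases (a b : ℝ) : eval (phases a b) = !![exp (a * I), 0; 0, exp (b * I)] := by
  rw [phases, phase, phase, ← mk_tens, eval_mk, sem_tens, sem_phase, sem_phase, dirSum_fin_one]

lemma eval_bs (θ : ℝ) :
    eval (bs θ) = !![cos (θ : ℂ), I * sin (θ : ℂ); I * sin (θ : ℂ), cos (θ : ℂ)] :=
  sem_bs θ

lemma phase_eq_of_exp_eq {a b : ℝ} (h : exp (a * I) = exp (b * I)) : phase a = phase b := by
  have hc : Circle.exp a = Circle.exp b := Circle.ext (by simpa only [Circle.coe_exp] using h)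
  obtain ⟨k, rfl⟩ := Circle.exp_eq_exp.mp hc
  exact phase_periodic.int_mul k b

/-! ## Givens rotations -/

/-- A phase shifter on the first mode followed by a beam splitter. -/
def givens (θ φ : ℝ) : LOPPClass 2 := bs θ * phases φ 0

/-- The normalization of the parameters of `givens θ φ` in the right-hand sides of axioms (F)
and (G): it selects one Givens rotation for each direction of a two-entry row. -/
structure IsGivensAngle (θ φ : ℝ) : Prop where
  angle_mem : θ ∈ Set.Ico 0 π
  phase_mem : φ ∈ Set.Ico 0 π
  phase_eq_zero : θ = 0 ∨ θ = π / 2 → φ = 0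

lemma isGivensAngle_zero_zero : IsGivensAngle 0 0 :=
  ⟨⟨le_rfl, Real.pi_pos⟩, ⟨le_rfl, Real.pi_pos⟩, fun _ ↦ rfl⟩

lemma eval_givens (θ φ : ℝ) : eval (givens θ φ) =
    !![cos (θ : ℂ) * exp (φ * I), I * sin (θ : ℂ);
      I * sin (θ : ℂ) * exp (φ * I), cos (θ : ℂ)] := by
  rw [givens, map_mul, eval_bs, eval_phases]
  simp

lemma arg_mem_Ico_or_arg_neg_mem_Ico (z : ℂ) :
    arg z ∈ Set.Ico 0 π ∨ arg (-z) ∈ Set.Ico 0 π := by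
  simp only [Set.mem_Ico, arg_nonneg_iff, arg_lt_pi_iff, neg_im, neg_re]
  grind

lemma exists_eq_ofReal_mul_exp (z : ℂ) :
    ∃ φ ∈ Set.Ico 0 π, ∃ r : ℝ, z = r * exp (φ * I) ∧ (r = 0 → φ = 0) := by
  rcases arg_mem_Ico_or_arg_neg_mem_Ico z with h | h
  · refine ⟨arg z, h, ‖z‖, (norm_mul_exp_arg_mul_I z).symm, fun hz ↦ ?_⟩
    rw [norm_eq_zero.mp hz, arg_zero]
  · refine ⟨arg (-z), h, -‖-z‖, ?_, fun hz ↦ ?_⟩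
    · rw [ofReal_neg, neg_mul, norm_mul_exp_arg_mul_I, neg_neg]
    · rw [norm_eq_zero.mp (neg_eq_zero.mp hz), arg_zero]

lemma exists_cos_eq_mul_sin (r : ℝ) : ∃ θ ∈ Set.Ioo 0 π, Real.cos θ = r * Real.sin θ := by
  refine ⟨π / 2 - Real.arctan r, ⟨?_, ?_⟩, ?_⟩
  · linarith [Real.arctan_lt_pi_div_two r]
  · linarith [Real.neg_pi_div_two_lt_arctan r]
  · rw [Real.cos_pi_div_two_sub, Real.sin_pi_div_two_sub,
      ← div_eq_iff (Real.cos_arctan_pos r).ne', ← Real.tan_eq_sin_div_cos, Real.tan_arctan]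

lemma exists_isGivensAngle_row (x y : ℂ) : ∃ (w : ℂ) (θ φ : ℝ), IsGivensAngle θ φ ∧
    (y = 0 → θ = 0) ∧ x = w * (cos (θ : ℂ) * exp (φ * I)) ∧ y = w * (I * sin (θ : ℂ)) := by
  by_cases hy : y = 0
  · exact ⟨x, 0, 0, isGivensAngle_zero_zero, fun _ ↦ rfl, by simp, by simp [hy]⟩
  obtain ⟨φ, hφ, r, hr, hr_zero⟩ := exists_eq_ofReal_mul_exp (x * I / y)
  obtain ⟨θ, hθ, hcot⟩ := exists_cos_eq_mul_sin r
  have hcos : cos (θ : ℂ) = r * sin (θ : ℂ) := mod_cast hcot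
  have hsin : sin (θ : ℂ) ≠ 0 := mod_cast (Real.sin_pos_of_mem_Ioo hθ).ne'
  refine ⟨y / (I * sin (θ : ℂ)), θ, φ, ⟨⟨hθ.1.le, hθ.2⟩, hφ, ?_⟩, fun h ↦ absurd h hy, ?_, ?_⟩
  · rintro (rfl | rfl)
    · exact absurd hθ.1 (lt_irrefl 0)
    · rw [Real.cos_pi_div_two, Real.sin_pi_div_two, mul_one] at hcot
      exact hr_zero hcot.symm
  · rw [hcos]
    field_simp at hr ⊢
    linear_combination hr
  · field_simp

lemma exists_exp_mul_I_eq_of_mem_unitary {z : ℂ} (hz : z ∈ unitary ℂ) :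
    ∃ φ : ℝ, exp (φ * I) = z :=
  (norm_eq_one_iff z).mp (CStarRing.norm_of_mem_unitary hz)

lemma exists_eval_phase_eq {W : Matrix (Fin 1) (Fin 1) ℂ} (hW : W ∈ unitaryGroup (Fin 1) ℂ) :
    ∃ φ, eval (phase φ) = W := by
  have hunit : W 0 0 ∈ unitary ℂ := by
    have h := congr_fun₂ (mem_unitaryGroup_iff.mp hW) 0 0
    rw [Unitary.mem_iff_self_mul_star]
    simpa [mul_apply, star_apply] using h
  obtain ⟨φ, hφ⟩ := exists_exp_mul_I_eq_of_mem_unitary hunit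
  refine ⟨φ, ?_⟩
  rw [eval_phase, hφ]
  ext i j
  fin_cases i, j
  rfl

lemma eval_phases_eq_blockCons (a b : ℝ) :
    eval (phases a b) = blockCons (exp (a * I)) (eval (phase b)) := by
  rw [eval_phases, eval_phase]
  ext i j
  fin_cases i <;> fin_cases j <;> rfl

theorem exists_eval_eq_of_mem_unitaryGroup_two {U : Matrix (Fin 2) (Fin 2) ℂ}
    (hU : U ∈ unitaryGroup (Fin 2) ℂ) :
    ∃ a b θ φ, IsGivensAngle θ φ ∧ U = eval (phases a b * givens θ φ) := by
  obtain ⟨w, θ, φ, hangle, -, hx, hy⟩ := exists_isGivensAngle_row (U 0 0) (U 0 1)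
  have hrow : U 0 = w • eval (givens θ φ) 0 := by
    rw [eval_givens]
    ext j
    fin_cases j
    exacts [hx, hy]
  obtain ⟨z, hz, W, hW, rfl⟩ := exists_eq_blockCons_mul hU (eval_mem_unitaryGroup _) hrow
  obtain ⟨a, rfl⟩ := exists_exp_mul_I_eq_of_mem_unitary hz
  obtain ⟨b, rfl⟩ := exists_eval_phase_eq hW
  exact ⟨a, b, θ, φ, hangle, by rw [map_mul, eval_phases_eq_blockCons]⟩

/-! ## Two modes -/

lemma exists_mem_Ico_phase_eq (a : ℝ) : ∃ a' ∈ Set.Ico 0 (2 * π), phase a = phase a' :=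
  phase_periodic.exists_mem_Ico₀ Real.two_pi_pos a

lemma mk_phase_tens_wire (a : ℝ) : mk ((LOPP.phase a).tens .wire) = phases a 0 := by
  rw [phases_zero_right, pad_apply, ← mk_wire, phase, mk_tens]

theorem bs_mul_phases_mul_bs_eq {α₁ α₂ α₃ a b θ φ : ℝ} (hangle : IsGivensAngle θ φ)
    (h : eval (givens α₃ α₂ * bs α₁) = eval (phases a b * givens θ φ)) :
    givens α₃ α₂ * bs α₁ = phases a b * givens θ φ := by
  obtain ⟨a', ha, haa⟩ := exists_mem_Ico_phase_eq a
  obtain ⟨b', hb, hbb⟩ := exists_mem_Ico_phase_eq b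
  rw [phases, haa, hbb, givens, givens, mul_assoc, ← mk_phase_tens_wire,
    ← mk_phase_tens_wire] at h ⊢
  exact mk_eq_mk.mpr (.euler2 α₁ α₂ α₃ φ θ a' b' hangle.phase_mem hangle.angle_mem ha hb
    hangle.phase_eq_zero h)

lemma givens_mul_phases (θ φ a b : ℝ) :
    givens θ φ * phases a b = phases b b * givens θ (φ + a - b) := by
  calc givens θ φ * phases a b = bs θ * phases b b * phases (φ + a - b) 0 := by
        rw [givens, mul_assoc, mul_assoc, phases_mul_phases, phases_mul_phases]
        congr 2 <;> ring
    _ = phases b b * givens θ (φ + a - b) := by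
        rw [(bs_commute_phases θ b).eq, mul_assoc, givens]

lemma exists_givens_mul_givens_eq (θ φ θ' φ' : ℝ) :
    ∃ a b η ψ, givens θ φ * givens θ' φ' = phases a b * givens η ψ := by
  obtain ⟨a, b, η, ψ, hangle, h⟩ :=
    exists_eval_eq_of_mem_unitaryGroup_two (eval_mem_unitaryGroup (givens θ φ * bs θ'))
  refine ⟨a, b, η, ψ + φ', ?_⟩
  rw [givens.eq_def θ', ← mul_assoc, bs_mul_phases_mul_bs_eq hangle h, mul_assoc, givens, mul_assoc,
    phases_mul_phases, add_zero, givens]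

theorem exists_eq_phases_mul_givens (x : LOPPClass 2) :
    ∃ a b θ φ, x = phases a b * givens θ φ := by
  induction x using induction_two with
  | phases a b => exact ⟨a, b, 0, 0, by rw [givens, bs_zero, phases_zero_zero, mul_one, mul_one]⟩
  | bs θ => exact ⟨0, 0, θ, 0, by rw [givens, phases_zero_zero, one_mul, mul_one]⟩
  | mul x y hx hy =>
    obtain ⟨a, b, θ, φ, rfl⟩ := hx
    obtain ⟨a', b', θ', φ', rfl⟩ := hy
    obtain ⟨c, d, η, ψ, h⟩ := exists_givens_mul_givens_eq θ (φ + a' - b') θ' φ'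
    refine ⟨a + b' + c, b + b' + d, η, ψ, ?_⟩
    calc phases a b * givens θ φ * (phases a' b' * givens θ' φ')
        = phases a b * (givens θ φ * phases a' b') * givens θ' φ' := by simp only [mul_assoc]
      _ = phases a b * phases b' b' * (givens θ (φ + a' - b') * givens θ' φ') := by
          rw [givens_mul_phases]
          simp only [mul_assoc]
      _ = phases (a + b' + c) (b + b' + d) * givens η ψ := by
          rw [h, ← mul_assoc, phases_mul_phases, phases_mul_phases]

lemma phases_mul_phases_neg (a b : ℝ) : phases a b * phases (-a) (-b) = 1 := by
  rw [phases_mul_phases, add_neg_cancel, add_neg_cancel, phases_zero_zero]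

lemma phases_neg_mul_phases (a b : ℝ) : phases (-a) (-b) * phases a b = 1 := by
  rw [phases_mul_phases, neg_add_cancel, neg_add_cancel, phases_zero_zero]

theorem eq_one_of_eval_eq_one_two {x : LOPPClass 2} (h : eval x = 1) : x = 1 := by
  obtain ⟨a, b, θ, φ, rfl⟩ := exists_eq_phases_mul_givens x
  have heval : eval (givens θ φ * bs 0) = eval (phases (-a) (-b) * givens 0 0) := by
    calc eval (givens θ φ * bs 0)
        = eval (phases (-a) (-b)) * eval (phases a b * givens θ φ) := by
          rw [← map_mul, ← mul_assoc, phases_neg_mul_phases, one_mul, bs_zero, mul_one]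
      _ = eval (phases (-a) (-b) * givens 0 0) := by
          rw [h, mul_one, givens, bs_zero, phases_zero_zero, mul_one, mul_one]
  have hgivens := bs_mul_phases_mul_bs_eq isGivensAngle_zero_zero heval
  rw [givens.eq_def 0, bs_zero, phases_zero_zero, mul_one, mul_one, mul_one] at hgivens
  rw [hgivens, phases_mul_phases_neg]

lemma bs_mul_bs_neg (θ : ℝ) : bs θ * bs (-θ) = 1 := by
  refine eq_one_of_eval_eq_one_two ?_
  have hdiag : cos (θ : ℂ) * cos (θ : ℂ) + I * sin (θ : ℂ) * -(I * sin (θ : ℂ)) = 1 := by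
    linear_combination cos_sq_add_sin_sq (θ : ℂ) - sin (θ : ℂ) ^ 2 * I_sq
  have hoff : I * sin (θ : ℂ) * cos (θ : ℂ) + cos (θ : ℂ) * -(I * sin (θ : ℂ)) = 0 := by ring
  rw [map_mul, eval_bs, eval_bs, ofReal_neg, Complex.cos_neg, Complex.sin_neg, mul_neg, mul_fin_two,
    add_comm (cos (θ : ℂ) * -(I * sin (θ : ℂ))), add_comm (I * sin (θ : ℂ) * -(I * sin (θ : ℂ))),
    hdiag, hoff, one_fin_two]

lemma isUnit (x : LOPPClass m) : IsUnit x := by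
  induction x using induction_on with
  | one => exact isUnit_one
  | mul m x y hx hy => exact hx.mul hy
  | pad m x hx => exact hx.map pad
  | shift m x hx => exact hx.map shift
  | phase φ =>
    have cancel (φ : ℝ) : phase φ * phase (-φ) = 1 := by
      rw [phase_mul_phase, add_neg_cancel, phase_zero]
    exact ⟨⟨phase φ, phase (-φ), cancel φ, by simpa only [neg_neg] using cancel (-φ)⟩, rfl⟩
  | bs θ =>
    exact ⟨⟨bs θ, bs (-θ), bs_mul_bs_neg θ, by simpa only [neg_neg] using bs_mul_bs_neg (-θ)⟩, rfl⟩

instance : Group (LOPPClass m) := groupOfIsUnit isUnit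

/-! ## Three modes -/

lemma mk_tens_wire (C : LOPP m) : mk (C.tens .wire) = pad (mk C) := by
  rw [pad_apply, ← mk_wire, mk_tens]

lemma mk_wire_tens (C : LOPP 2) : mk (LOPP.wire.tens C) = shift (mk C) := by
  rw [shift_apply, ← mk_wire, ← mk_tens, castModes_rfl]

lemma mk_wire_tens_phase (b : ℝ) : mk (LOPP.wire.tens (.phase b)) = phases 0 b := by
  rw [phases, phase_zero, ← mk_wire, phase, mk_tens]

lemma pad_phases_zero_left (b : ℝ) : pad (phases 0 b) = shift (phases b 0) := by
  rw [phases_zero_left, phases_zero_right, shift_pad]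

lemma pad_phases_commute_shift (a : ℝ) (x : LOPPClass 2) :
    Commute (pad (phases a 0)) (shift x) := by
  rw [phases_zero_right]
  exact pad_pad_commute_shift _ _

lemma pad_commute_shift_phases (x : LOPPClass 2) (b : ℝ) :
    Commute (pad x) (shift (phases 0 b)) := by
  rw [phases_zero_left]
  exact padTwo_commute_shift_shift (k := 1) x _

/-- The right-hand side of axiom (G), with `δ₁, …, δ₆` read as the parameters of three Givens
rotations in the order in which light meets them and `δ₇, δ₈, δ₉` as `a, b, c`. -/
def eulerThree (a b c : ℝ) (θ φ : Fin 3 → ℝ) : LOPPClass 3 :=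
  shift (phases b c * givens (θ 2) (φ 2)) * pad (phases a 0 * givens (θ 1) (φ 1)) *
    shift (givens (θ 0) (φ 0))

lemma eval_pad_phases_zero_right (a : ℝ) :
    eval (pad (phases a 0)) = blockCons (exp (a * I)) 1 := by
  rw [phases_zero_right, eval_pad, eval_pad, eval_phase]
  ext i j
  fin_cases i <;> fin_cases j <;> rfl

lemma eval_eulerThree (a b c : ℝ) (θ φ : Fin 3 → ℝ) : eval (eulerThree a b c θ φ) =
    blockCons (exp (a * I)) (eval (phases b c * givens (θ 2) (φ 2))) *
      eval (pad (givens (θ 1) (φ 1)) * shift (givens (θ 0) (φ 0))) := by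
  have h : eulerThree a b c θ φ = pad (phases a 0) * shift (phases b c * givens (θ 2) (φ 2)) *
      (pad (givens (θ 1) (φ 1)) * shift (givens (θ 0) (φ 0))) := by
    rw [eulerThree, (pad_phases_commute_shift _ _).eq, map_mul pad]
    simp only [mul_assoc]
  rw [h, map_mul, map_mul, eval_pad_phases_zero_right, eval_shift, blockCons_mul_blockCons,
    mul_one, one_mul]

lemma eval_pad_givens_mul_shift_givens_row (θ φ η ψ : ℝ) :
    eval (pad (givens θ φ) * shift (givens η ψ)) 0 =
      ![cos (θ : ℂ) * exp (φ * I), I * sin (θ : ℂ) * (cos (η : ℂ) * exp (ψ * I)),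
        I * sin (θ : ℂ) * (I * sin (η : ℂ))] := by
  have row_pad : eval (pad (givens θ φ)) 0 = ![cos (θ : ℂ) * exp (φ * I), I * sin (θ : ℂ), 0] := by
    rw [eval_pad, eval_givens]
    ext j
    fin_cases j <;> rfl
  have row_one : eval (shift (givens η ψ)) 0 = ![1, 0, 0] := by
    rw [eval_shift]
    ext j
    fin_cases j <;> rfl
  have row_two : eval (shift (givens η ψ)) 1 =
      ![0, cos (η : ℂ) * exp (ψ * I), I * sin (η : ℂ)] := by
    rw [eval_shift, eval_givens]
    ext j
    fin_cases j <;> rfl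
  ext j
  rw [map_mul, mul_apply, Fin.sum_univ_three, row_pad, row_one, row_two]
  fin_cases j <;> simp

theorem exists_eval_eulerThree_eq {U : Matrix (Fin 3) (Fin 3) ℂ}
    (hU : U ∈ unitaryGroup (Fin 3) ℂ) :
    ∃ a b c θ φ, (∀ i, IsGivensAngle (θ i) (φ i)) ∧ (θ 1 = 0 → θ 0 = 0) ∧
      U = eval (eulerThree a b c θ φ) := by
  obtain ⟨v, η, ψ, hη, hη_zero, hone, htwo⟩ := exists_isGivensAngle_row (U 0 1) (U 0 2)
  obtain ⟨w, θ, φ, hθ, -, hzero, rfl⟩ := exists_isGivensAngle_row (U 0 0) v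
  have hrow : U 0 = w • eval (pad (givens θ φ) * shift (givens η ψ)) 0 := by
    rw [eval_pad_givens_mul_shift_givens_row]
    ext j
    fin_cases j
    exacts [hzero, hone.trans (mul_assoc _ _ _), htwo.trans (mul_assoc _ _ _)]
  obtain ⟨z, hz, W, hW, rfl⟩ := exists_eq_blockCons_mul hU (eval_mem_unitaryGroup _) hrow
  obtain ⟨a, rfl⟩ := exists_exp_mul_I_eq_of_mem_unitary hz
  obtain ⟨b, c, ξ, χ, hξ, rfl⟩ := exists_eval_eq_of_mem_unitaryGroup_two hW
  refine ⟨a, b, c, ![η, θ, ξ], ![ψ, φ, χ], ?_, fun h ↦ hη_zero ?_, ?_⟩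
  · intro i
    fin_cases i
    exacts [hη, hθ, hξ]
  · rw [htwo, show θ = 0 from h, ofReal_zero, Complex.sin_zero, mul_zero, mul_zero, zero_mul]
  · simp only [eval_eulerThree, cons_val]

lemma pad_givens_mul_shift_givens (θ φ η ψ : ℝ) :
    pad (givens θ φ) * shift (givens η ψ) =
      pad (bs θ) * (shift (bs η) * (pad (phases φ 0) * shift (phases ψ 0))) := by
  calc pad (givens θ φ) * shift (givens η ψ)
      = pad (bs θ) * (pad (phases φ 0) * shift (bs η)) * shift (phases ψ 0) := by
        simp only [givens, map_mul, mul_assoc]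
    _ = pad (bs θ) * (shift (bs η) * (pad (phases φ 0) * shift (phases ψ 0))) := by
        rw [(pad_phases_commute_shift φ _).eq]
        simp only [mul_assoc]

lemma eulerThree_eq_mk (a b c : ℝ) (θ φ : Fin 3 → ℝ) : eulerThree a b c θ φ =
    mk ((LOPP.wire.tens (LOPP.wire.tens (LOPP.phase c))).comp
      ((LOPP.wire.tens ((LOPP.phase b).tens LOPP.wire)).comp
        ((((LOPP.phase a).tens LOPP.wire).tens LOPP.wire).comp
          ((LOPP.wire.tens (LOPP.bs (θ 2))).comp
            ((LOPP.wire.tens ((LOPP.phase (φ 2)).tens LOPP.wire)).comp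
              (((LOPP.bs (θ 1)).tens LOPP.wire).comp
                ((LOPP.wire.tens (LOPP.bs (θ 0))).comp
                  ((((LOPP.phase (φ 1)).tens LOPP.wire).tens LOPP.wire).comp
                    (LOPP.wire.tens ((LOPP.phase (φ 0)).tens LOPP.wire)))))))))) := by
  have hphases : phases b c = phases 0 c * phases b 0 := by
    rw [phases_mul_phases, zero_add, add_zero]
  calc eulerThree a b c θ φ
      = shift (phases b c) * (shift (givens (θ 2) (φ 2)) * pad (phases a 0)) *
          (pad (givens (θ 1) (φ 1)) * shift (givens (θ 0) (φ 0))) := by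
        simp only [eulerThree, map_mul, mul_assoc]
    _ = shift (phases 0 c) * (shift (phases b 0) * (pad (phases a 0) *
          (shift (bs (θ 2)) * (shift (phases (φ 2) 0) * (pad (bs (θ 1)) *
            (shift (bs (θ 0)) * (pad (phases (φ 1) 0) * shift (phases (φ 0) 0)))))))) := by
        rw [← (pad_phases_commute_shift a _).eq, pad_givens_mul_shift_givens, hphases, givens]
        simp only [map_mul, mul_assoc]
    _ = _ := by
        simp only [mk_comp, mk_wire_tens, mk_tens_wire, mk_wire_tens_phase, bs, phase,
          phases_zero_right]

theorem pad_bs_mul_shift_bs_mul_pad_eq_eulerThree {γ₁ γ₂ γ₃ γ₄ a b c : ℝ} {θ φ : Fin 3 → ℝ}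
    (hangle : ∀ i, IsGivensAngle (θ i) (φ i)) (hzero : θ 1 = 0 → θ 0 = 0)
    (h : eval (pad (bs γ₄) * shift (bs γ₃) * pad (phases γ₂ 0 * bs γ₁)) =
      eval (eulerThree a b c θ φ)) :
    pad (bs γ₄) * shift (bs γ₃) * pad (phases γ₂ 0 * bs γ₁) = eulerThree a b c θ φ := by
  have hleft : pad (bs γ₄) * shift (bs γ₃) * pad (phases γ₂ 0 * bs γ₁) =
      mk (((LOPP.bs γ₄).tens LOPP.wire).comp ((LOPP.wire.tens (LOPP.bs γ₃)).comp
        ((((LOPP.phase γ₂).tens LOPP.wire).tens LOPP.wire).comp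
          ((LOPP.bs γ₁).tens LOPP.wire)))) := by
    simp only [mk_comp, mk_wire_tens, mk_tens_wire, bs, phase, phases_zero_right, map_mul,
      mul_assoc]
  obtain ⟨a', ha, haa⟩ := exists_mem_Ico_phase_eq a
  obtain ⟨b', hb, hbb⟩ := exists_mem_Ico_phase_eq b
  obtain ⟨c', hc, hcc⟩ := exists_mem_Ico_phase_eq c
  have hmod : eulerThree a b c θ φ = eulerThree a' b' c' θ φ := by
    simp only [eulerThree, phases, haa, hbb, hcc]
  rw [hmod, hleft, eulerThree_eq_mk] at h ⊢
  exact mk_eq_mk.mpr (.euler3 γ₁ γ₂ γ₃ γ₄ (φ 0) (φ 1) (θ 0) (θ 1) (φ 2) (θ 2) a' b' c'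
    (hangle 0).phase_mem (hangle 1).phase_mem (hangle 0).angle_mem (hangle 1).angle_mem
    (hangle 2).phase_mem (hangle 2).angle_mem ha hb hc (hangle 0).phase_eq_zero
    (hangle 1).phase_eq_zero hzero (hangle 2).phase_eq_zero h)

/-! ## Shift sandwiches -/

/-- The classes on `k + 2` modes of the form `shift A * padTwo k X * shift B`, that is, with a
single two-mode interaction involving the first mode. -/
def IsShiftSandwich (x : LOPPClass (k + 2)) : Prop :=
  ∃ A X B, x = shift A * padTwo k X * shift B

lemma isShiftSandwich_shift (x : LOPPClass (k + 1)) : IsShiftSandwich (shift x) :=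
  ⟨x, 1, 1, by rw [map_one, map_one, mul_one, mul_one]⟩

lemma isShiftSandwich_padTwo (x : LOPPClass 2) : IsShiftSandwich (padTwo k x) :=
  ⟨1, x, 1, by rw [map_one, one_mul, mul_one]⟩

namespace IsShiftSandwich

lemma shift_mul {x : LOPPClass (k + 2)} (hx : IsShiftSandwich x) (y : LOPPClass (k + 1)) :
    IsShiftSandwich (shift y * x) := by
  obtain ⟨A, X, B, rfl⟩ := hx
  exact ⟨y * A, X, B, by simp only [map_mul, mul_assoc]⟩

lemma mul_shift {x : LOPPClass (k + 2)} (hx : IsShiftSandwich x) (y : LOPPClass (k + 1)) :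
    IsShiftSandwich (x * shift y) := by
  obtain ⟨A, X, B, rfl⟩ := hx
  exact ⟨A, X, B * y, by simp only [map_mul, mul_assoc]⟩

lemma pad_phases_mul {x : LOPPClass 3} (hx : IsShiftSandwich x) (a b : ℝ) :
    IsShiftSandwich (pad (phases a b) * x) := by
  obtain ⟨A, X, B, rfl⟩ := hx
  have h : pad (phases a b) * (shift A * pad X * shift B) =
      shift (phases b 0) * (shift A * pad (phases a 0 * X) * shift B) := by
    calc pad (phases a b) * (shift A * pad X * shift B)
        = pad (phases 0 b) * (pad (phases a 0) * shift A) * pad X * shift B := by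
          rw [← mul_assoc (pad (phases 0 b)), ← map_mul, phases_mul_phases, zero_add, add_zero]
          simp only [mul_assoc]
      _ = shift (phases b 0) * (shift A * pad (phases a 0 * X) * shift B) := by
          rw [(pad_phases_commute_shift a A).eq, pad_phases_zero_left, map_mul]
          simp only [mul_assoc]
  exact h ▸ shift_mul ⟨A, _, B, rfl⟩ _

lemma mul_pad_phases {x : LOPPClass 3} (hx : IsShiftSandwich x) (a b : ℝ) :
    IsShiftSandwich (x * pad (phases a b)) := by
  obtain ⟨A, X, B, rfl⟩ := hx
  have h : shift A * pad X * shift B * pad (phases a b) =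
      shift A * pad (X * phases a 0) * shift B * shift (phases b 0) := by
    calc shift A * pad X * shift B * pad (phases a b)
        = shift A * pad X * (shift B * pad (phases a 0)) * pad (phases 0 b) := by
          rw [← mul_assoc _ _ (pad (phases a 0)), mul_assoc _ (pad (phases a 0)), ← map_mul,
            phases_mul_phases, zero_add, add_zero]
      _ = shift A * pad (X * phases a 0) * shift B * shift (phases b 0) := by
          rw [← (pad_phases_commute_shift a B).eq, pad_phases_zero_left, map_mul]
          simp only [mul_assoc]
  exact h ▸ mul_shift ⟨A, _, B, rfl⟩ _

end IsShiftSandwich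

lemma isShiftSandwich_bs_bs_bs (γ₁ γ₂ γ₃ γ₄ : ℝ) :
    IsShiftSandwich (pad (bs γ₄) * shift (bs γ₃) * pad (phases γ₂ 0 * bs γ₁)) := by
  obtain ⟨a, b, c, θ, φ, hangle, hzero, h⟩ := exists_eval_eulerThree_eq (eval_mem_unitaryGroup
    (pad (bs γ₄) * shift (bs γ₃) * pad (phases γ₂ 0 * bs γ₁)))
  rw [pad_bs_mul_shift_bs_mul_pad_eq_eulerThree hangle hzero h]
  exact ⟨_, _, _, rfl⟩

lemma exists_eq_phases_mul_bs_mul_phases (x : LOPPClass 2) :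
    ∃ a b θ c, x = phases a b * bs θ * phases 0 c := by
  obtain ⟨a, b, θ, φ, rfl⟩ := exists_eq_phases_mul_givens x
  refine ⟨a + φ, b + φ, θ, -φ, ?_⟩
  calc phases a b * givens θ φ = phases a b * (bs θ * phases φ φ) * phases 0 (-φ) := by
        rw [givens, mul_assoc, mul_assoc, phases_mul_phases, add_zero, add_neg_cancel]
    _ = phases (a + φ) (b + φ) * bs θ * phases 0 (-φ) := by
        rw [(bs_commute_phases θ φ).eq, ← mul_assoc, phases_mul_phases]

lemma bs_mul_phases_zero_left (θ a : ℝ) :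
    bs θ * phases 0 a = phases a a * bs θ * phases (-a) 0 := by
  rw [← (bs_commute_phases θ a).eq, mul_assoc, phases_mul_phases, add_neg_cancel, add_zero]

lemma isShiftSandwich_bs_shift_bs (α γ a : ℝ) (y : LOPPClass 2) :
    IsShiftSandwich (pad (bs α) * shift y * pad (phases a 0 * bs γ)) := by
  obtain ⟨p, q, β, r, rfl⟩ := exists_eq_phases_mul_bs_mul_phases y
  have h : pad (bs α) * shift (phases p q * bs β * phases 0 r) * pad (phases a 0 * bs γ) =
      shift (phases 0 q) * (pad (phases p p) *
        (pad (bs α) * shift (bs β) * pad (phases (-p + a) 0 * bs γ))) * shift (phases 0 r) := by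
    calc pad (bs α) * shift (phases p q * bs β * phases 0 r) * pad (phases a 0 * bs γ)
        = pad (bs α) * shift (phases 0 q) * shift (phases p 0) * shift (bs β) *
            (shift (phases 0 r) * pad (phases a 0 * bs γ)) := by
          rw [mul_assoc (pad (bs α)) (shift (phases 0 q)), ← map_mul, phases_mul_phases, zero_add,
            add_zero]
          simp only [map_mul, mul_assoc]
      _ = shift (phases 0 q) * pad (bs α * phases 0 p) * shift (bs β) *
            (pad (phases a 0 * bs γ) * shift (phases 0 r)) := by
          rw [(pad_commute_shift_phases (bs α) q).eq, ← (pad_commute_shift_phases _ r).eq,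
            ← pad_phases_zero_left, map_mul pad (bs α), mul_assoc (shift (phases 0 q))]
      _ = shift (phases 0 q) * pad (phases p p) * pad (bs α) *
            (pad (phases (-p) 0) * shift (bs β)) * pad (phases a 0 * bs γ) *
              shift (phases 0 r) := by
          rw [bs_mul_phases_zero_left]
          simp only [map_mul, mul_assoc]
      _ = shift (phases 0 q) * (pad (phases p p) *
            (pad (bs α) * shift (bs β) * (pad (phases (-p) 0) * pad (phases a 0 * bs γ)))) *
              shift (phases 0 r) := by
          rw [(pad_phases_commute_shift (-p) (bs β)).eq]
          simp only [mul_assoc]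
      _ = _ := by rw [← map_mul pad, ← mul_assoc (phases (-p) 0), phases_mul_phases, zero_add]
  rw [h]
  exact (((isShiftSandwich_bs_bs_bs γ (-p + a) β α).pad_phases_mul p p).shift_mul _).mul_shift _

lemma isShiftSandwich_bs_shift_pad (α : ℝ) (y z : LOPPClass 2) :
    IsShiftSandwich (pad (bs α) * shift y * pad z) := by
  obtain ⟨a, b, γ, φ, rfl⟩ := exists_eq_phases_mul_givens z
  have h : pad (bs α) * shift y * pad (phases a b * givens γ φ) =
      pad (bs α) * shift (y * phases b 0) * pad (phases a 0 * bs γ) * pad (phases φ 0) := by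
    have hphases : phases a b = phases 0 b * phases a 0 := by
      rw [phases_mul_phases, zero_add, add_zero]
    rw [hphases, givens]
    simp only [map_mul, ← pad_phases_zero_left, mul_assoc]
  rw [h]
  exact (isShiftSandwich_bs_shift_bs α γ a _).mul_pad_phases φ 0

theorem isShiftSandwich_pad_mul_shift_mul_pad (x y z : LOPPClass 2) :
    IsShiftSandwich (pad x * shift y * pad z) := by
  obtain ⟨a, b, θ, φ, rfl⟩ := exists_eq_phases_mul_givens x
  have h : pad (phases a b * givens θ φ) * shift y * pad z =
      pad (phases a b) * (pad (bs θ) * shift y * pad (phases φ 0 * z)) := by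
    calc pad (phases a b * givens θ φ) * shift y * pad z
        = pad (phases a b) * (pad (bs θ) * (pad (phases φ 0) * shift y) * pad z) := by
          simp only [givens, map_mul, mul_assoc]
      _ = pad (phases a b) * (pad (bs θ) * shift y * pad (phases φ 0 * z)) := by
          rw [(pad_phases_commute_shift φ y).eq, map_mul]
          simp only [mul_assoc]
  rw [h]
  exact (isShiftSandwich_bs_shift_pad θ y _).pad_phases_mul a b

lemma exists_padTwo_mul_shift_mul_padTwo_eq (k : ℕ) (x y z : LOPPClass 2) :
    ∃ y₁ x' y₂, padTwo (k + 1) x * shift (padTwo k y) * padTwo (k + 1) z =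
      shift (padTwo k y₁) * padTwo (k + 1) x' * shift (padTwo k y₂) := by
  induction k with
  | zero => exact isShiftSandwich_pad_mul_shift_mul_pad x y z
  | succ k ih =>
    obtain ⟨y₁, x', y₂, h⟩ := ih
    exact ⟨y₁, x', y₂, by simpa only [padTwo_succ, shift_pad, map_mul] using congrArg pad h⟩

theorem isShiftSandwich (x : LOPPClass (k + 2)) : IsShiftSandwich x := by
  induction k with
  | zero => exact isShiftSandwich_padTwo x
  | succ k ih =>
    induction x using induction_add_three with
    | one => exact map_one shift ▸ isShiftSandwich_shift 1
    | pad x =>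
      obtain ⟨A, X, B, rfl⟩ := ih x
      exact ⟨pad A, X, pad B, by simp only [map_mul, shift_pad, padTwo_succ]⟩
    | shift x => exact isShiftSandwich_shift x
    | mul x x' hx hx' =>
      obtain ⟨A, X, B, rfl⟩ := hx
      obtain ⟨A', X', B', rfl⟩ := hx'
      obtain ⟨C, Y, D, hBA⟩ := ih (B * A')
      obtain ⟨Y₁, X'', Y₂, h⟩ := exists_padTwo_mul_shift_mul_padTwo_eq k X Y X'
      refine ⟨A * shift C * padTwo k Y₁, X'', padTwo k Y₂ * shift D * B', ?_⟩
      calc shift A * padTwo (k + 1) X * shift B * (shift A' * padTwo (k + 1) X' * shift B')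
          = shift A * (padTwo (k + 1) X * shift (shift C)) * shift (padTwo k Y) *
              (shift (shift D) * padTwo (k + 1) X') * shift B' := by
            rw [← mul_assoc _ _ (shift B'), ← mul_assoc _ (shift A'), mul_assoc _ (shift B),
              ← map_mul shift B, hBA]
            simp only [map_mul, mul_assoc]
        _ = shift A * shift (shift C) * (padTwo (k + 1) X * shift (padTwo k Y) *
              padTwo (k + 1) X') * shift (shift D) * shift B' := by
            rw [(padTwo_commute_shift_shift X C).eq, ← (padTwo_commute_shift_shift X' D).eq]
            simp only [mul_assoc]
        _ = shift (A * shift C * padTwo k Y₁) * padTwo (k + 1) X'' *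
              shift (padTwo k Y₂ * shift D * B') := by
            rw [h]
            simp only [map_mul, mul_assoc]

/-! ## Completeness -/

lemma eval_padTwo_castLE (k : ℕ) (x : LOPPClass 2) (i j : Fin 2) :
    eval (padTwo k x) (i.castLE (Nat.le_add_left 2 k)) (j.castLE (Nat.le_add_left 2 k)) =
      eval x i j := by
  induction k with
  | zero => rfl
  | succ k ih =>
    rw [padTwo_succ, eval_pad]
    exact (dirSum_castAdd_castAdd _ _ _ _).trans ih

lemma exists_eq_shift_phase {x : LOPPClass 2} (hzero : eval x 0 0 = 1) (hone : eval x 0 1 = 0) :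
    ∃ φ, x = shift (phase φ) := by
  obtain ⟨z, -, W, hW, h⟩ :=
    exists_eq_blockCons_of_zero_row (eval_mem_unitaryGroup x) (Fin.forall_fin_one.mpr hone)
  obtain ⟨φ, rfl⟩ := exists_eval_phase_eq hW
  obtain rfl : z = 1 := by rw [← hzero, h, blockCons_zero_zero]
  refine ⟨φ, mul_inv_eq_one.mp (eq_one_of_eval_eq_one_two ?_)⟩
  rw [map_mul, h, ← eval_shift, ← map_mul, mul_inv_cancel, map_one]

lemma exists_padTwo_shift_eq (k : ℕ) (x : LOPPClass 1) : ∃ y, padTwo k (shift x) = shift y := by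
  induction k with
  | zero => exact ⟨x, rfl⟩
  | succ k ih =>
    obtain ⟨y, h⟩ := ih
    exact ⟨pad y, by rw [padTwo_succ, h, shift_pad]⟩

lemma exists_padTwo_eq_shift {x : LOPPClass 2} {y : LOPPClass (k + 1)}
    (h : eval (padTwo k x) = eval (shift y)) : ∃ z, padTwo k x = shift z := by
  have entry (j : Fin 2) : eval x 0 j =
      blockCons 1 (eval y) 0 (j.castLE (Nat.le_add_left 2 k)) := by
    rw [← eval_padTwo_castLE k, h, eval_shift]
    rfl
  obtain ⟨φ, rfl⟩ := exists_eq_shift_phase (entry 0) (entry 1)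
  exact exists_padTwo_shift_eq k _

theorem exists_eq_shift {x : LOPPClass (k + 2)} (h : eval x = 1) : ∃ y, x = shift y := by
  obtain ⟨A, X, B, rfl⟩ := isShiftSandwich x
  have hX : eval (padTwo k X) = eval (shift (A⁻¹ * B⁻¹)) := by
    calc eval (padTwo k X)
        = eval (shift A⁻¹ * (shift A * padTwo k X * shift B) * shift B⁻¹) := by
          rw [map_inv shift, map_inv shift]
          group
      _ = eval (shift (A⁻¹ * B⁻¹)) := by rw [map_mul, map_mul, h, mul_one, ← map_mul, ← map_mul]
  obtain ⟨Y, hY⟩ := exists_padTwo_eq_shift hX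
  exact ⟨A * Y * B, by rw [hY, map_mul, map_mul]⟩

theorem eq_one_of_eval_eq_one {x : LOPPClass m} (h : eval x = 1) : x = 1 := by
  induction m using Nat.twoStepInduction with
  | zero => exact eq_one_of_modes_zero x
  | one =>
    obtain ⟨φ, rfl⟩ := exists_eq_phase x
    rw [← map_one eval, ← phase_zero, eval_phase, eval_phase] at h
    rw [phase_eq_of_exp_eq (congr_fun₂ h 0 0), phase_zero]
  | more k _ ih =>
    obtain ⟨y, rfl⟩ := exists_eq_shift h
    rw [eval_shift, ← blockCons_one_one, blockCons_inj] at h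
    rw [ih h.2, map_one]

theorem eval_injective : Function.Injective (eval : LOPPClass m → Matrix (Fin m) (Fin m) ℂ) :=
  (injective_iff_map_eq_one eval).mpr fun _ ↦ eq_one_of_eval_eq_one

end LOPPClass

/-- Soundness and completeness of the equational theory LOPP
(Theorem 1 of the paper): two raw LOPP circuits are provably equal iff they have
the same interpretation. -/
theorem LOPP_soundness_completeness (m : ℕ) (C₁ C₂ : LOPP m) :
    LOPPeq C₁ C₂ ↔ sem C₁ = sem C₂ := by
  constructor
  · exact sem_eq_of_LOPPeq
  · intro h
    exact LOPPClass.mk_eq_mk.mp (LOPPClass.eval_injective h)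

end
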